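/- There is an absolute constant C > 0 such that for every real x ≥ 2: (i) max_{|t| ≤ 1/2} ∑_{p ≤ x} (1 − cos(t·log p))/p ≤ log log x + C; and (ii) for every nonzero integer k, with y_k := exp((log(2|k|))²), max_{|t−k| ≤ 1/2} ∑_{y_k < p ≤ x} (1 − cos(t·log p))/p ≤ log log x + C. All sums are over primes p. -/

import Mathlib

/-!
The sums are compared with the Riemann zeta function just to the right of the line `Re s = 1`.
By the Euler product, and because `-ζ'/ζ(1 + u) = 1/u + O(1)`, for every real `t`
`∑_{p ≤ x} cos (t log p) / p = log |ζ(1 + 1/log x + it)| + O(1)` (`prime_sum_eq`); for `t = 0` the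
right side is `log log x + O(1)`.

For `|t| ≤ 1/2` the function `(s - 1) ζ(s)` has no zero on the relevant compact box, so
`log |ζ|` is bounded below there, which gives the first bound (`small_height`).

For `|t - k| ≤ 1/2`, `k ≠ 0`, one has to bound the increase of `log |ζ(1 + u + it)|` from
`u = 1/log x` to `u = 1/log y_k = 1/log (2|k|) ^ 2` (`large_height`). Its derivative in `u` is
`Re ζ'/ζ`, so it is enough to show `Re ζ'/ζ(1 + u + it) ≤ C log (|t| + 4)` for `0 < u ≤ 3`
(`re_logDeriv_le`). This is a form of the classical zero-free region. By Landau's lemma (`landau`)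
and a polynomial growth bound (`zeta1_growth`), `Re ζ'/ζ(1 + u + it)` is, up to `O(log (|t| + 4))`,
a sum over zeros `ρ` near `1 + it` of the nonnegative terms `Re 1 / (1 + u + it - ρ)`. The inequality
`3 + 4 cos θ + cos 2θ ≥ 0` bounds this sum by `(3/4) / u + O(log (|t| + 4))`. At `u = u₀`, a small
multiple of `1 / log (|t| + 4)`, this forces all zeros to have distance at least `u₀ / 10` from
`1 + it`, so the sum stays `O(1 / u₀)` for all `u ≤ u₀` (`zero_sum_bound`). For `u ≥ u₀` the trivial
bound by `-ζ'/ζ(1 + u)` suffices.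

Mathlib's `riemannZeta₁` is the entire function `(s - 1) ζ(s)`.
-/

open Finset

open scoped Classical

noncomputable def primesUpTo (y : ℝ) : Finset ℕ := (Finset.Iic ⌊y⌋₊).filter Nat.Prime

/-- Primes `p` with `a < p ≤ y`. -/
noncomputable def primesIn (a y : ℝ) : Finset ℕ :=
  (Finset.Iic ⌊y⌋₊).filter fun p : ℕ => p.Prime ∧ a < (p : ℝ)

/-! ### Landau's lemma on the logarithmic derivative -/

/-- An entire function that is not identically zero is a power of `z - ρ` times an entire function
not vanishing at `ρ`; the exponent is the analytic order at `ρ`. -/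
lemma entire_factor_point {f : ℂ → ℂ} (hf : Differentiable ℂ f) {c : ℂ} (hc : f c ≠ 0) (ρ : ℂ) :
    ∃ (n : ℕ) (g : ℂ → ℂ), Differentiable ℂ g ∧ g ρ ≠ 0 ∧ ∀ z, f z = (z - ρ) ^ n * g z := by
  have han : AnalyticOnNhd ℂ f Set.univ := fun z _ => hf.analyticAt z
  have hord : analyticOrderAt f ρ ≠ ⊤ := by
    intro h
    rw [analyticOrderAt_eq_top] at h
    exact hc (han.eqOn_zero_of_preconnected_of_eventuallyEq_zero
      isPreconnected_univ (Set.mem_univ ρ) h (Set.mem_univ c))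
  obtain ⟨n, hn⟩ := ENat.ne_top_iff_exists.mp hord
  obtain ⟨g₀, hg₀, hg₀ρ, heq⟩ := ((hf.analyticAt ρ).analyticOrderAt_eq_natCast).1 hn.symm
  set g : ℂ → ℂ := Function.update (fun z => f z / (z - ρ) ^ n) ρ (g₀ ρ) with hg
  have hgg : g =ᶠ[nhds ρ] g₀ := by
    filter_upwards [heq] with z hz
    by_cases h : z = ρ
    · subst h; simp [hg]
    · have : (z - ρ) ^ n ≠ 0 := pow_ne_zero _ (sub_ne_zero.2 h)
      simp [hg, h, hz, this]
  refine ⟨n, g, fun z => ?_, by simpa [hg] using hg₀ρ, fun z => ?_⟩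
  · by_cases h : z = ρ
    · subst h; exact (hgg.differentiableAt_iff).2 hg₀.differentiableAt
    · have h1 : g =ᶠ[nhds z] fun z => f z / (z - ρ) ^ n := by
        filter_upwards [isOpen_ne.mem_nhds h] with w hw
        have hw' : w ≠ ρ := hw
        simp [hg, hw']
      refine (h1.differentiableAt_iff).2 ?_
      exact (hf z).div (by fun_prop) (pow_ne_zero _ (sub_ne_zero.2 h))
  · by_cases h : z = ρ
    · subst h
      have := heq.self_of_nhds
      simpa [hg] using this
    · have : (z - ρ) ^ n ≠ 0 := pow_ne_zero _ (sub_ne_zero.2 h)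
      simp [hg, h]; field_simp

lemma entire_factor_finset {f : ℂ → ℂ} (hf : Differentiable ℂ f) {c : ℂ} (hc : f c ≠ 0)
    (Z : Finset ℂ) :
    ∃ (m : ℂ → ℕ) (g : ℂ → ℂ), Differentiable ℂ g ∧ (∀ ρ ∈ Z, g ρ ≠ 0) ∧
      ∀ z, f z = (∏ ρ ∈ Z, (z - ρ) ^ m ρ) * g z := by
  induction Z using Finset.induction_on with
  | empty => exact ⟨0, f, hf, by simp, by simp⟩
  | insert a Z ha ih =>
    obtain ⟨m, g, hg, hgZ, hfac⟩ := ih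
    have hgc : g c ≠ 0 := fun h => hc (by rw [hfac, h, mul_zero])
    obtain ⟨n, g', hg', hg'a, hfac'⟩ := entire_factor_point hg hgc a
    refine ⟨Function.update m a n, g', hg', ?_, fun z => ?_⟩
    · intro ρ hρ
      rcases Finset.mem_insert.1 hρ with rfl | h
      · exact hg'a
      · intro h0
        exact hgZ ρ h (by rw [hfac', h0, mul_zero])
    · rw [Finset.prod_insert ha, hfac, hfac' z]
      have : ∏ ρ ∈ Z, (z - ρ) ^ (Function.update m a n ρ) = ∏ ρ ∈ Z, (z - ρ) ^ m ρ := by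
        refine Finset.prod_congr rfl fun ρ hρ => ?_
        have hne : ρ ≠ a := fun h => ha (h ▸ hρ)
        rw [Function.update_of_ne hne]
      rw [this]; simp; ring

lemma zeros_finite {f : ℂ → ℂ} (hf : Differentiable ℂ f) {c : ℂ} (hc : f c ≠ 0)
    {K : Set ℂ} (hK : IsCompact K) : {z ∈ K | f z = 0}.Finite := by
  by_contra hinf
  obtain ⟨x, -, hx⟩ := Set.Infinite.exists_accPt_of_subset_isCompact hinf hK (fun z hz => hz.1)
  have han : AnalyticOnNhd ℂ f Set.univ := fun z _ => hf.analyticAt z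
  refine hc (han.eqOn_zero_of_preconnected_of_frequently_eq_zero
      isPreconnected_univ (Set.mem_univ x) ?_ (Set.mem_univ c))
  rw [accPt_iff_frequently_nhdsNE] at hx
  exact hx.mono fun z hz => hz.2

/-- A holomorphic logarithm of `g / g c` on a disc where `g` has no zero, with derivative `g' / g`. -/
lemma exists_log_ball {g : ℂ → ℂ} (hg : Differentiable ℂ g) {c : ℂ} {r : ℝ} (hr : 0 < r)
    (hne : ∀ z ∈ Metric.ball c r, g z ≠ 0) :
    ∃ L : ℂ → ℂ, L c = 0 ∧ ∀ z ∈ Metric.ball c r,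
      HasDerivAt L (deriv g z / g z) z ∧ Complex.exp (L z) = g z / g c := by
  have hd : DifferentiableOn ℂ (fun z => deriv g z / g z) (Metric.ball c r) := by
    have hg' : Differentiable ℂ (deriv g) := by fun_prop
    intro z hz
    exact ((hg' z).div (hg z) (hne z hz)).differentiableWithinAt
  obtain ⟨L, hLc, hL⟩ := hd.isExactOn_ball.with_val_at c 0
  have hcm : c ∈ Metric.ball c r := Metric.mem_ball_self hr
  have key : ∀ z ∈ Metric.ball c r, g z * Complex.exp (-L z) = g c * Complex.exp (-L c) := by
    intro z hz
    have hder : ∀ w ∈ Metric.ball c r, HasDerivWithinAt (fun z => g z * Complex.exp (-L z)) 0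
        (Metric.ball c r) w := by
      intro w hw
      have h1 := ((hg w).hasDerivAt.mul ((hL w hw).neg.cexp)).hasDerivWithinAt
        (s := Metric.ball c r)
      have hz0 : deriv g w * Complex.exp ((-L) w) +
          g w * (Complex.exp ((-L) w) * -(deriv g w / g w)) = 0 := by
        have := hne w hw
        field_simp
        ring
      rw [hz0] at h1
      exact h1
    have := (convex_ball c r).norm_image_sub_le_of_norm_hasDerivWithin_le (C := 0) hder
      (by simp) hcm hz
    have h2 : ‖g z * Complex.exp (-L z) - g c * Complex.exp (-L c)‖ ≤ 0 := by simpa using this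
    exact sub_eq_zero.1 (norm_le_zero_iff.1 h2)
  refine ⟨L, hLc, fun z hz => ⟨hL z hz, ?_⟩⟩
  have h := key z hz
  rw [hLc, neg_zero, Complex.exp_zero, mul_one, Complex.exp_neg] at h
  have h1 := hne c hcm
  have h2 := Complex.exp_ne_zero (L z)
  field_simp at h ⊢
  rw [h]

/-- Landau's lemma. If `|f|` is at most `exp B * |f c|` on a disc around `c`, then on a smaller disc
`f' / f` equals the sum of `m ρ / (z - ρ)` over finitely many zeros, up to `O(B)`. Dividing out the
zeros near `c` leaves a function obeying the same bound by the maximum principle; the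
Borel–Carathéodory inequality bounds its logarithm, and Cauchy's estimate the derivative of that.
The multiplicity function `m` takes values in `ℕ`; only this integrality is used later. -/
lemma landau {f : ℂ → ℂ} (hf : Differentiable ℂ f) {c : ℂ} (hc : f c ≠ 0) {B : ℝ} (hB : 0 < B)
    (hM : ∀ z ∈ Metric.closedBall c (3/5), ‖f z‖ ≤ Real.exp B * ‖f c‖) :
    ∃ (Z : Finset ℂ) (m : ℂ → ℕ), (∀ ρ ∈ Z, f ρ = 0) ∧
      ∀ z ∈ Metric.closedBall c (1/4), f z ≠ 0 →
        ‖deriv f z / f z - ∑ ρ ∈ Z, (m ρ : ℂ) / (z - ρ)‖ ≤ 880 * B := by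
  have hfin := zeros_finite hf hc (isCompact_closedBall c (3/10 : ℝ))
  set Z := hfin.toFinset with hZ
  have hZmem : ∀ ρ, ρ ∈ Z ↔ ρ ∈ Metric.closedBall c (3/10 : ℝ) ∧ f ρ = 0 := by
    intro ρ; simp [hZ]
  obtain ⟨m, g, hg, hgZ, hfac⟩ := entire_factor_finset hf hc Z
  have hgne : ∀ z ∈ Metric.closedBall c (3/10 : ℝ), g z ≠ 0 := by
    intro z hz h0
    have : f z = 0 := by rw [hfac, h0, mul_zero]
    exact hgZ z ((hZmem z).2 ⟨hz, this⟩) h0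
  have hgc : g c ≠ 0 := hgne c (Metric.mem_closedBall_self (by norm_num))
  -- On `|z - c| = 3/5` every zero `ρ` with `|ρ - c| ≤ 3/10` satisfies `|z - ρ| ≥ |c - ρ|`.
  have hsph : ∀ z ∈ Metric.sphere c (3/5 : ℝ), ‖g z‖ ≤ Real.exp B * ‖g c‖ := by
    intro z hz
    have h1 := hM z (Metric.sphere_subset_closedBall hz)
    rw [hfac z, hfac c, norm_mul, norm_mul] at h1
    have hprod : ‖∏ ρ ∈ Z, (c - ρ) ^ m ρ‖ ≤ ‖∏ ρ ∈ Z, (z - ρ) ^ m ρ‖ := by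
      rw [norm_prod, norm_prod]
      refine Finset.prod_le_prod (fun _ _ => norm_nonneg _) fun ρ hρ => ?_
      rw [norm_pow, norm_pow]
      refine pow_le_pow_left₀ (norm_nonneg _) ?_ _
      have h2 := ((hZmem ρ).1 hρ).1
      rw [Metric.mem_closedBall, dist_eq_norm] at h2
      rw [Metric.mem_sphere, dist_eq_norm] at hz
      have h3 : ‖z - c‖ ≤ ‖z - ρ‖ + ‖ρ - c‖ := by
        simpa using norm_add_le (z - ρ) (ρ - c)
      rw [norm_sub_rev c ρ]
      linarith
    have hpc : 0 < ‖∏ ρ ∈ Z, (c - ρ) ^ m ρ‖ := by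
      rw [norm_pos_iff]
      intro h0
      exact hc (by rw [hfac, h0, zero_mul])
    have h4 : ‖∏ ρ ∈ Z, (c - ρ) ^ m ρ‖ * ‖g z‖ ≤
        ‖∏ ρ ∈ Z, (c - ρ) ^ m ρ‖ * (Real.exp B * ‖g c‖) := by
      calc _ ≤ ‖∏ ρ ∈ Z, (z - ρ) ^ m ρ‖ * ‖g z‖ := by gcongr
        _ ≤ _ := h1
        _ = _ := by ring
    exact le_of_mul_le_mul_left h4 hpc
  have hball : ∀ z ∈ Metric.ball c (3/10 : ℝ), ‖g z‖ ≤ Real.exp B * ‖g c‖ := by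
    intro z hz
    refine Complex.norm_le_of_forall_mem_frontier_norm_le (U := Metric.ball c (3/5 : ℝ))
      Metric.isBounded_ball hg.diffContOnCl ?_ (subset_closure ?_)
    · intro w hw
      rw [frontier_ball c (by norm_num)] at hw
      exact hsph w hw
    · exact Metric.ball_subset_ball (by norm_num) hz
  obtain ⟨L, hLc, hL⟩ := exists_log_ball hg (by norm_num : (0:ℝ) < 3/10)
    (fun z hz => hgne z (Metric.ball_subset_closedBall hz))
  -- Borel–Carathéodory for the logarithm of `g / g c`.
  have hBC : ∀ z ∈ Metric.closedBall c (11/40 : ℝ), ‖L z‖ ≤ 22 * B := by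
    intro z hz
    rw [Metric.mem_closedBall, dist_eq_norm] at hz
    have h := Complex.borelCaratheodory_zero (f := fun w => L (c + w)) (M := B) (R := 3/10)
      (z := z - c) hB ?_ ?_ (by norm_num) ?_ (by simpa using hLc)
    · simp only [add_sub_cancel] at h
      refine h.trans ?_
      rw [div_le_iff₀ (by linarith)]
      nlinarith [norm_nonneg (z - c)]
    · intro w hw
      have hw' : c + w ∈ Metric.ball c (3/10 : ℝ) := by
        simpa [Metric.mem_ball, dist_eq_norm] using hw
      have := (hL _ hw').1.differentiableAt
      exact (this.comp w (by fun_prop : DifferentiableAt ℂ (fun w => c + w) w)).differentiableWithinAt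
    · intro w hw
      have hw' : c + w ∈ Metric.ball c (3/10 : ℝ) := by
        simpa [Metric.mem_ball, dist_eq_norm] using hw
      have h1 := congrArg norm (hL _ hw').2
      rw [Complex.norm_exp, norm_div] at h1
      have h2 : Real.exp (L (c + w)).re ≤ Real.exp B := by
        rw [h1, div_le_iff₀ (norm_pos_iff.2 hgc)]
        exact hball _ hw'
      exact Real.exp_le_exp.1 h2
    · simp [dist_eq_norm]; linarith
  refine ⟨Z, m, fun ρ hρ => ((hZmem ρ).1 hρ).2, fun z hz hfz => ?_⟩
  have hz' := hz
  rw [Metric.mem_closedBall, dist_eq_norm] at hz'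
  have hzb : z ∈ Metric.ball c (3/10 : ℝ) := by
    rw [Metric.mem_ball, dist_eq_norm]; linarith
  have hgz : g z ≠ 0 := hgne z (Metric.ball_subset_closedBall hzb)
  have hsub : Metric.closedBall z (1/40 : ℝ) ⊆ Metric.closedBall c (11/40 : ℝ) := by
    apply Metric.closedBall_subset_closedBall'
    rw [dist_eq_norm]; linarith
  have hderL : ‖deriv L z‖ ≤ 22 * B / (1/40) := by
    refine Complex.norm_deriv_le_of_forall_mem_sphere_norm_le (by norm_num) ?_ ?_
    · refine DifferentiableOn.diffContOnCl ?_
      intro w hw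
      rw [closure_ball z (by norm_num)] at hw
      have hw2 : w ∈ Metric.ball c (3/10 : ℝ) :=
        Metric.closedBall_subset_ball (by norm_num) (hsub hw)
      exact (hL w hw2).1.differentiableAt.differentiableWithinAt
    · intro w hw
      exact hBC w (hsub (Metric.sphere_subset_closedBall hw))
  have hprodne : ∏ ρ ∈ Z, (z - ρ) ^ m ρ ≠ 0 := fun h0 => hfz (by rw [hfac, h0, zero_mul])
  have hlog : deriv f z / f z = ∑ ρ ∈ Z, (m ρ : ℂ) / (z - ρ) + deriv g z / g z := by
    have hff : f = fun z => (∏ ρ ∈ Z, (z - ρ) ^ m ρ) * g z := funext hfac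
    have h1 : logDeriv f z = logDeriv (fun z => ∏ ρ ∈ Z, (z - ρ) ^ m ρ) z + logDeriv g z := by
      conv_lhs => rw [hff]
      exact logDeriv_mul z hprodne hgz (by fun_prop) (hg z)
    have h2 : logDeriv (fun z => ∏ ρ ∈ Z, (z - ρ) ^ m ρ) z = ∑ ρ ∈ Z, (m ρ : ℂ) / (z - ρ) := by
      rw [logDeriv_prod (f := fun ρ z => (z - ρ) ^ m ρ)]
      · refine Finset.sum_congr rfl fun ρ hρ => ?_
        rw [logDeriv_fun_pow (by fun_prop)]
        simp [logDeriv_apply, div_eq_mul_inv]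
      · intro ρ hρ; exact Finset.prod_ne_zero_iff.1 hprodne ρ hρ
      · intro ρ hρ; fun_prop
    rw [h2] at h1
    simpa [logDeriv_apply] using h1
  rw [hlog, add_sub_cancel_left, ← (hL z hzb).1.deriv]
  refine hderL.trans (le_of_eq ?_)
  ring

/-! ### Growth of `(s - 1) ζ(s)` -/

/-- The `n`-th term of the series `(s - 1) ζ(s) = 1 + ∑ emTerm s n`. It equals `s - 1` times the
difference between `(n + 1) ^ (-s)` and the integral of `y ^ (-s)` over `[n + 1, n + 2]`. -/
noncomputable def emTerm (s : ℂ) (n : ℕ) : ℂ :=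
  (s - 1) * ((n : ℂ) + 1) ^ (-s) + ((n : ℂ) + 2) ^ (1 - s) - ((n : ℂ) + 1) ^ (1 - s)

lemma hasDerivAt_cpow_real (w : ℂ) {x : ℝ} (hx : 0 < x) :
    HasDerivAt (fun y : ℝ => (y : ℂ) ^ w) (w * (x : ℂ) ^ (w - 1)) x := by
  have h : HasDerivAt (fun z : ℂ => z ^ w) (w * (x : ℂ) ^ (w - 1)) (x : ℂ) := by
    have := (hasDerivAt_id (x : ℂ)).cpow_const (c := w) (Or.inl (by simpa using hx))
    simpa using this
  exact h.comp_ofReal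

/-- The mean value inequality, once for `y ^ (-s)` and once for a primitive of
`(n + 1) ^ (-s) - y ^ (-s)`, gains a factor `1 / (n + 1)` over the individual powers. -/
lemma norm_emTerm_le {s : ℂ} (hs : 0 < s.re) (n : ℕ) :
    ‖emTerm s n‖ ≤ ‖s‖ * ‖s - 1‖ * ((n : ℝ) + 1) ^ (-s.re - 1) := by
  set a : ℝ := (n : ℝ) + 1 with ha
  have ha0 : 0 < a := by positivity
  set D : ℝ := ‖s‖ * a ^ (-s.re - 1) with hD
  have hD0 : 0 ≤ D := by positivity
  have h1 : ∀ x ∈ Set.Icc a (a + 1), ‖(x : ℂ) ^ (-s) - (a : ℂ) ^ (-s)‖ ≤ D := by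
    intro x hx
    have := (convex_Icc a (a + 1)).norm_image_sub_le_of_norm_hasDerivWithin_le
      (f := fun y : ℝ => (y : ℂ) ^ (-s)) (C := D)
      (f' := fun y : ℝ => (-s) * (y : ℂ) ^ (-s - 1))
      (fun y hy => (hasDerivAt_cpow_real (-s) (ha0.trans_le hy.1)).hasDerivWithinAt)
      (fun y hy => by
        have hy0 : 0 < y := ha0.trans_le hy.1
        rw [norm_mul, norm_neg, Complex.norm_cpow_eq_rpow_re_of_pos hy0]
        simp only [Complex.sub_re, Complex.neg_re, Complex.one_re, hD]
        exact mul_le_mul_of_nonneg_left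
          (Real.rpow_le_rpow_of_nonpos ha0 hy.1 (by linarith)) (norm_nonneg _))
      (Set.left_mem_Icc.2 (by linarith)) hx
    refine this.trans ?_
    have h2 : ‖x - a‖ ≤ 1 := by
      rw [Real.norm_eq_abs, abs_le]; constructor <;> linarith [hx.1, hx.2]
    nlinarith
  have h2 := (convex_Icc a (a + 1)).norm_image_sub_le_of_norm_hasDerivWithin_le
      (f := fun y : ℝ => (s - 1) * (a : ℂ) ^ (-s) * (y : ℂ) + (y : ℂ) ^ (1 - s))
      (C := ‖s - 1‖ * D)
      (f' := fun y : ℝ => (s - 1) * (a : ℂ) ^ (-s) * 1 + (1 - s) * (y : ℂ) ^ (1 - s - 1))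
      (fun y hy => ((((hasDerivAt_id y).ofReal_comp).const_mul _).add
          (hasDerivAt_cpow_real (1 - s) (ha0.trans_le hy.1))).hasDerivWithinAt)
      (fun y hy => by
        have e : (s - 1) * (a : ℂ) ^ (-s) * 1 + (1 - s) * (y : ℂ) ^ (1 - s - 1)
            = -((s - 1) * ((y : ℂ) ^ (-s) - (a : ℂ) ^ (-s))) := by
          rw [show 1 - s - 1 = -s by ring]; ring
        rw [e, norm_neg, norm_mul]
        gcongr
        exact h1 y hy)
      (Set.left_mem_Icc.2 (by linarith)) (Set.right_mem_Icc.2 (by linarith))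
  have e : emTerm s n = (s - 1) * (a : ℂ) ^ (-s) * ((a + 1 : ℝ) : ℂ) + ((a + 1 : ℝ) : ℂ) ^ (1 - s)
      - ((s - 1) * (a : ℂ) ^ (-s) * (a : ℂ) + (a : ℂ) ^ (1 - s)) := by
    have e1 : ((n : ℂ) + 1) = (a : ℂ) := by simp [ha]
    have e2 : ((n : ℂ) + 2) = ((a + 1 : ℝ) : ℂ) := by simp [ha]; ring
    rw [emTerm, e1, e2]
    push_cast
    ring
  rw [e]
  refine h2.trans (le_of_eq ?_)
  simp [hD]
  ring

lemma summable_em {δ : ℝ} (hδ : 0 < δ) : Summable fun n : ℕ => ((n : ℝ) + 1) ^ (-δ - 1) := by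
  have := (summable_nat_add_iff 1).2 (Real.summable_nat_rpow.2 (by linarith : -δ - 1 < -1))
  simpa using this

lemma zeta1_eq_of_one_lt {s : ℂ} (hs : 1 < s.re) :
    riemannZeta₁ s = 1 + ∑' n, emTerm s n := by
  have hs1 : s ≠ 1 := by rintro rfl; simp at hs
  have hz : riemannZeta₁ s = (s - 1) * riemannZeta s := by
    rw [riemannZeta_eq_inv_sub_mul hs1]
    have := sub_ne_zero.2 hs1
    field_simp
  have hsum1 : HasSum (fun n : ℕ => (s - 1) * ((n : ℂ) + 1) ^ (-s)) ((s - 1) * riemannZeta s) := by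
    apply HasSum.mul_left
    rw [zeta_eq_tsum_one_div_nat_add_one_cpow hs]
    have : Summable (fun n : ℕ => 1 / ((n : ℂ) + 1) ^ s) := by
      have := (summable_nat_add_iff 1).2 (Complex.summable_one_div_nat_cpow.2 hs)
      simpa using this
    simpa [Complex.cpow_neg] using this.hasSum
  have htend : Filter.Tendsto (fun n : ℕ => ((n : ℂ) + 1) ^ (1 - s)) Filter.atTop (nhds 0) := by
    rw [tendsto_zero_iff_norm_tendsto_zero]
    have h1 : ∀ n : ℕ, ‖((n : ℂ) + 1) ^ (1 - s)‖ = ((n : ℝ) + 1) ^ (-(s.re - 1)) := by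
      intro n
      have : ((n : ℂ) + 1) = (((n : ℝ) + 1 : ℝ) : ℂ) := by push_cast; rfl
      rw [this, Complex.norm_cpow_eq_rpow_re_of_pos (by positivity)]
      simp
    simp_rw [h1]
    exact (tendsto_rpow_neg_atTop (by linarith)).comp
      (Filter.tendsto_atTop_add_const_right _ _ tendsto_natCast_atTop_atTop)
  have hpart : ∀ N : ℕ, ∑ n ∈ range N, emTerm s n =
      ∑ n ∈ range N, (s - 1) * ((n : ℂ) + 1) ^ (-s) + (((N : ℂ) + 1) ^ (1 - s) - 1) := by
    intro N
    induction N with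
    | zero => simp
    | succ N ih =>
      rw [Finset.sum_range_succ, ih, Finset.sum_range_succ, emTerm]
      push_cast
      rw [show (N : ℂ) + 1 + 1 = N + 2 by ring]
      ring
  have hsumm : Summable (emTerm s) := by
    refine Summable.of_norm_bounded ((summable_em (by linarith : 0 < s.re)).mul_left (‖s‖ * ‖s - 1‖))
      fun n => norm_emTerm_le (by linarith) n
  have h3 := hsumm.hasSum.tendsto_sum_nat
  have h4 : Filter.Tendsto (fun N => ∑ n ∈ range N, emTerm s n) Filter.atTop
      (nhds ((s - 1) * riemannZeta s + (0 - 1))) := by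
    simp_rw [hpart]
    exact hsum1.tendsto_sum_nat.add (htend.sub_const 1)
  rw [tendsto_nhds_unique h3 h4, hz]
  ring

/-- Both sides are holomorphic on `Re s > 1/2` and agree on `Re s > 1`. -/
lemma zeta1_eq {s : ℂ} (hs : 1 / 2 < s.re) : riemannZeta₁ s = 1 + ∑' n, emTerm s n := by
  set U : Set ℂ := {s : ℂ | 1 / 2 < s.re} with hU
  have hUo : IsOpen U := isOpen_lt continuous_const Complex.continuous_re
  have hUc : IsPreconnected U := (convex_halfSpace_re_gt (1/2)).isPreconnected
  have hdiff : DifferentiableOn ℂ (fun s => 1 + ∑' n, emTerm s n) U := by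
    intro s₀ hs₀
    set V : Set ℂ := U ∩ Metric.ball 0 (‖s₀‖ + 1)
    have hV : IsOpen V := hUo.inter Metric.isOpen_ball
    have hsV : s₀ ∈ V := ⟨hs₀, by simp⟩
    have hR : 0 ≤ (‖s₀‖ + 1) * (‖s₀‖ + 2) := by positivity
    have h := Complex.differentiableOn_tsum_of_summable_norm (F := fun n s => emTerm s n) (U := V)
      ((summable_em (by norm_num : (0:ℝ) < 1/2)).mul_left ((‖s₀‖ + 1) * (‖s₀‖ + 2))) ?_ hV ?_
    · exact ((h s₀ hsV).differentiableAt (hV.mem_nhds hsV)).const_add 1 |>.differentiableWithinAt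
    · intro n
      unfold emTerm
      have h1 : (n : ℂ) + 1 ≠ 0 := by exact_mod_cast Nat.succ_ne_zero n
      have h2 : (n : ℂ) + 2 ≠ 0 := by exact_mod_cast Nat.succ_ne_zero (n + 1)
      intro s _
      refine DifferentiableAt.differentiableWithinAt ?_
      refine ((by fun_prop : DifferentiableAt ℂ (fun s : ℂ => s - 1) s).mul
        ((by fun_prop : DifferentiableAt ℂ (fun s : ℂ => -s) s).const_cpow (Or.inl h1))).add
        ((by fun_prop : DifferentiableAt ℂ (fun s : ℂ => 1 - s) s).const_cpow (Or.inl h2)) |>.sub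
        ((by fun_prop : DifferentiableAt ℂ (fun s : ℂ => 1 - s) s).const_cpow (Or.inl h1))
    · intro n w hw
      have hw1 : 1 / 2 < w.re := hw.1
      have hw2 : ‖w‖ < ‖s₀‖ + 1 := by simpa using hw.2
      refine (norm_emTerm_le (by linarith) n).trans ?_
      have h3 : ‖w - 1‖ ≤ ‖s₀‖ + 2 := by
        refine (norm_sub_le _ _).trans ?_
        simp; linarith
      have h4 : ((n : ℝ) + 1) ^ (-w.re - 1) ≤ ((n : ℝ) + 1) ^ (-(1/2 : ℝ) - 1) :=
        Real.rpow_le_rpow_of_exponent_le (by linarith [(Nat.cast_nonneg n : (0:ℝ) ≤ n)]) (by linarith)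
      gcongr
  have h1 : AnalyticOnNhd ℂ (fun s => 1 + ∑' n, emTerm s n) U := hdiff.analyticOnNhd hUo
  have h2 : AnalyticOnNhd ℂ riemannZeta₁ U := fun z _ => differentiable_riemannZeta₁.analyticAt z
  have h2U : (2 : ℂ) ∈ U := by simp [hU]; norm_num
  refine h2.eqOn_of_preconnected_of_eventuallyEq h1 hUc h2U ?_ hs
  have : {s : ℂ | 1 < s.re} ∈ nhds (2 : ℂ) :=
    (isOpen_lt continuous_const Complex.continuous_re).mem_nhds (by simp)
  filter_upwards [this] with s hs
  exact zeta1_eq_of_one_lt hs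

lemma zeta1_growth : ∃ A : ℝ, 0 < A ∧ ∀ s : ℂ, 1 / 2 < s.re →
    ‖riemannZeta₁ s‖ ≤ 1 + A * (‖s‖ * ‖s - 1‖) := by
  have hS := summable_em (by norm_num : (0:ℝ) < 1/2)
  refine ⟨1 + ∑' n : ℕ, ((n : ℝ) + 1) ^ (-(1/2 : ℝ) - 1), ?_, fun s hs => ?_⟩
  · have : 0 ≤ ∑' n : ℕ, ((n : ℝ) + 1) ^ (-(1/2 : ℝ) - 1) := tsum_nonneg fun n => by positivity
    linarith
  · rw [zeta1_eq hs]
    refine (norm_add_le _ _).trans ?_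
    rw [norm_one]
    have h : ‖∑' n, emTerm s n‖ ≤ ∑' n : ℕ, ‖s‖ * ‖s - 1‖ * ((n : ℝ) + 1) ^ (-(1/2 : ℝ) - 1) := by
      refine tsum_of_norm_bounded (hS.mul_left _).hasSum fun n => ?_
      refine (norm_emTerm_le (by linarith) n).trans ?_
      have h4 : ((n : ℝ) + 1) ^ (-s.re - 1) ≤ ((n : ℝ) + 1) ^ (-(1/2 : ℝ) - 1) :=
        Real.rpow_le_rpow_of_exponent_le (by linarith [(Nat.cast_nonneg n : (0:ℝ) ≤ n)]) (by linarith)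
      gcongr
    rw [tsum_mul_left] at h
    have : 0 ≤ ‖s‖ * ‖s - 1‖ := by positivity
    nlinarith

/-! ### Points near the line `Re s = 1` -/

/-- The point `1 + u + i t` of the complex plane. -/
noncomputable def linePt (u t : ℝ) : ℂ := ⟨1 + u, t⟩

@[simp] lemma linePt_re (u t : ℝ) : (linePt u t).re = 1 + u := rfl
@[simp] lemma linePt_im (u t : ℝ) : (linePt u t).im = t := rfl

lemma linePt_sub_one (u t : ℝ) : linePt u t - 1 = ⟨u, t⟩ := by
  apply Complex.ext <;> simp

lemma cpow_neg_linePt {x : ℝ} (hx : 0 < x) (u t : ℝ) :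
    ((x : ℂ) ^ (-linePt u t)).re = x ^ (-(1 + u)) * Real.cos (t * Real.log x) ∧
    ‖(x : ℂ) ^ (-linePt u t)‖ = x ^ (-(1 + u)) := by
  constructor
  · rw [Complex.cpow_def_of_ne_zero (by exact_mod_cast hx.ne'), ← Complex.ofReal_log hx.le,
      Complex.exp_re, Real.rpow_def_of_pos hx]
    simp only [Complex.re_ofReal_mul, Complex.im_ofReal_mul, Complex.neg_re, Complex.neg_im,
      linePt_re, linePt_im]
    rw [← Real.cos_neg]
    congr 2
    ring
  · rw [Complex.norm_cpow_eq_rpow_re_of_pos hx]; simp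

/-! ### The logarithmic derivative as a Dirichlet series -/

lemma vonMangoldt_hasSum {u : ℝ} (hu : 0 < u) (t : ℝ) :
    HasSum (fun n : ℕ => ArithmeticFunction.vonMangoldt n * ((n : ℝ) ^ (-(1 + u))
      * Real.cos (t * Real.log n)))
      (-(deriv riemannZeta (linePt u t) / riemannZeta (linePt u t))).re := by
  have hs : 1 < (linePt u t).re := by simp [hu]
  have h := (ArithmeticFunction.LSeriesSummable_vonMangoldt hs).LSeriesHasSum
  rw [ArithmeticFunction.LSeries_vonMangoldt_eq_deriv_riemannZeta_div hs, neg_div] at h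
  have h2 := Complex.hasSum_re h
  refine h2.congr_fun fun n => ?_
  rcases Nat.eq_zero_or_pos n with rfl | hn
  · simp
  · rw [LSeries.term_of_ne_zero hn.ne', div_eq_mul_inv, ← Complex.cpow_neg, Complex.re_ofReal_mul]
    have := (cpow_neg_linePt (x := n) (by exact_mod_cast hn) u t).1
    simp only [Complex.ofReal_natCast] at this
    rw [this]

/-- Comparison with the real axis, from `-cos ≤ 1`. -/
lemma re_logDeriv_le_real {u : ℝ} (hu : 0 < u) (t : ℝ) :
    (deriv riemannZeta (linePt u t) / riemannZeta (linePt u t)).re ≤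
      (-(deriv riemannZeta (linePt u 0) / riemannZeta (linePt u 0))).re := by
  have h1 := (vonMangoldt_hasSum hu t).neg
  have h2 := vonMangoldt_hasSum hu 0
  rw [Complex.neg_re, neg_neg] at h1
  refine hasSum_le (fun n => ?_) h1 h2
  have := Real.neg_one_le_cos (t * Real.log n)
  have h3 : 0 ≤ ArithmeticFunction.vonMangoldt n * (n : ℝ) ^ (-(1 + u)) :=
    mul_nonneg ArithmeticFunction.vonMangoldt_nonneg (by positivity)
  simp only [zero_mul, Real.cos_zero, mul_one]
  nlinarith

/-- The inequality `3 + 4 cos θ + cos 2θ ≥ 0`, summed against `Λ(n) n ^ (-1-u)`. -/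
lemma three_four_one {u : ℝ} (hu : 0 < u) (t : ℝ) :
    0 ≤ 3 * (-(deriv riemannZeta (linePt u 0) / riemannZeta (linePt u 0))).re
      + 4 * (-(deriv riemannZeta (linePt u t) / riemannZeta (linePt u t))).re
      + (-(deriv riemannZeta (linePt u (2 * t)) / riemannZeta (linePt u (2 * t)))).re := by
  have h := (((vonMangoldt_hasSum hu 0).mul_left 3).add
    ((vonMangoldt_hasSum hu t).mul_left 4)).add (vonMangoldt_hasSum hu (2 * t))
  refine h.nonneg fun n => ?_
  have h3 : 0 ≤ ArithmeticFunction.vonMangoldt n * (n : ℝ) ^ (-(1 + u)) :=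
    mul_nonneg ArithmeticFunction.vonMangoldt_nonneg (by positivity)
  have e : Real.cos (2 * t * Real.log n) = 2 * Real.cos (t * Real.log n) ^ 2 - 1 := by
    rw [mul_assoc, Real.cos_two_mul]
  rw [e]
  simp only [zero_mul, Real.cos_zero, mul_one]
  have : 0 ≤ (ArithmeticFunction.vonMangoldt n * (n : ℝ) ^ (-(1 + u))) *
    (2 * (Real.cos (t * Real.log n) + 1) ^ 2) := by positivity
  nlinarith

lemma zeta_ne_zero {u : ℝ} (hu : 0 < u) (t : ℝ) : riemannZeta (linePt u t) ≠ 0 :=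
  riemannZeta_ne_zero_of_one_le_re (by simp [hu.le])

lemma linePt_ne_one {u t : ℝ} (h : 0 < u ∨ t ≠ 0) : linePt u t ≠ 1 := by
  intro h1
  have hr := congrArg Complex.re h1
  have hi := congrArg Complex.im h1
  simp at hr hi
  rcases h with h | h
  · linarith
  · exact h hi

lemma zeta1_ne_zero {s : ℂ} (hs : 1 ≤ s.re) : riemannZeta₁ s ≠ 0 := by
  by_cases h : s = 1
  · subst h; simp
  · intro h0
    apply riemannZeta_ne_zero_of_one_le_re hs
    rw [riemannZeta_eq_inv_sub_mul h, h0, mul_zero]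

lemma logDeriv_zeta_eq {s : ℂ} (hs : 1 ≤ s.re) (h1 : s ≠ 1) :
    deriv riemannZeta s / riemannZeta s = -(s - 1)⁻¹ + deriv riemannZeta₁ s / riemannZeta₁ s := by
  have h2 := zeta1_ne_zero hs
  have h3 := sub_ne_zero.2 h1
  rw [deriv_riemannZeta_eq_neg_inv_sub_sq_mul_add h1, riemannZeta_eq_inv_sub_mul h1]
  field_simp

/-- On the compact box `1 ≤ Re s ≤ 4`, `|Im s| ≤ 1/2` the function `(s - 1) ζ(s)` is bounded above
and below, and its logarithmic derivative is bounded. -/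
lemma zeta1_box : ∃ C : ℝ, 0 < C ∧ ∀ u t : ℝ, 0 ≤ u → u ≤ 3 → |t| ≤ 1 / 2 →
    ‖deriv riemannZeta₁ (linePt u t) / riemannZeta₁ (linePt u t)‖ ≤ C ∧
    |Real.log ‖riemannZeta₁ (linePt u t)‖| ≤ C := by
  set K : Set ℂ := Set.Icc 1 4 ×ℂ Set.Icc (-(1/2)) (1/2) with hK
  have hKc : IsCompact K := isCompact_Icc.reProdIm isCompact_Icc
  have hne : ∀ s ∈ K, riemannZeta₁ s ≠ 0 := fun s hs => zeta1_ne_zero hs.1.1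
  have hd : Differentiable ℂ riemannZeta₁ := differentiable_riemannZeta₁
  have hc1 : ContinuousOn (fun s => deriv riemannZeta₁ s / riemannZeta₁ s) K :=
    (hd.deriv.continuous.continuousOn).div hd.continuous.continuousOn hne
  have hc2 : ContinuousOn (fun s => Real.log ‖riemannZeta₁ s‖) K :=
    (hd.continuous.norm.continuousOn).log fun s hs => norm_ne_zero_iff.2 (hne s hs)
  obtain ⟨C1, h1⟩ := hKc.exists_bound_of_continuousOn hc1
  obtain ⟨C2, h2⟩ := hKc.exists_bound_of_continuousOn hc2
  refine ⟨max (max C1 C2) 1, by positivity, fun u t hu0 hu3 ht => ?_⟩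
  have hmem : linePt u t ∈ K := by
    rw [abs_le] at ht
    refine ⟨⟨?_, ?_⟩, ⟨?_, ?_⟩⟩ <;> simp <;> linarith
  exact ⟨(h1 _ hmem).trans ((le_max_left _ _).trans (le_max_left _ _)),
    (h2 _ hmem).trans ((le_max_right _ _).trans (le_max_left _ _))⟩

lemma neg_logDeriv_real_le : ∃ C : ℝ, 0 < C ∧ ∀ u : ℝ, 0 < u → u ≤ 3 →
    (-(deriv riemannZeta (linePt u 0) / riemannZeta (linePt u 0))).re ≤ 1 / u + C := by
  obtain ⟨C, hC, h⟩ := zeta1_box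
  refine ⟨C, hC, fun u hu hu3 => ?_⟩
  rw [logDeriv_zeta_eq (by simp [hu.le]) (linePt_ne_one (Or.inl hu)), linePt_sub_one]
  have h1 := (h u 0 hu.le hu3 (by simp)).1
  have h2 : ((⟨u, 0⟩ : ℂ)⁻¹).re = 1 / u := by
    have : (⟨u, 0⟩ : ℂ) = (u : ℂ) := rfl
    rw [this, ← Complex.ofReal_inv, Complex.ofReal_re, one_div]
  have h3 := (abs_le.1 (Complex.abs_re_le_norm
    (deriv riemannZeta₁ (linePt u 0) / riemannZeta₁ (linePt u 0)))).1
  simp only [Complex.neg_re, Complex.add_re]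
  rw [h2]
  linarith

/-! ### Prime sums and `log |ζ|` -/

/-- `log |ζ(1+u+it)|` is the prime sum `∑ cos (t log p) / p^(1+u)` up to a bounded error, uniformly
in `u > 0` and `t`. -/
lemma log_zeta_primes : ∃ C : ℝ, 0 < C ∧ ∀ u t : ℝ, 0 < u →
    |Real.log ‖riemannZeta (linePt u t)‖ -
      ∑' p : Nat.Primes, (p : ℝ) ^ (-(1 + u)) * Real.cos (t * Real.log p)| ≤ C := by
  have hS : Summable fun p : Nat.Primes => ((p : ℕ) : ℝ) ^ (-2 : ℝ) :=
    Nat.Primes.summable_rpow.2 (by norm_num)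
  refine ⟨1 + ∑' p : Nat.Primes, ((p : ℕ) : ℝ) ^ (-2 : ℝ), ?_, fun u t hu => ?_⟩
  · have : 0 ≤ ∑' p : Nat.Primes, ((p : ℕ) : ℝ) ^ (-2 : ℝ) := tsum_nonneg fun p => by positivity
    linarith
  have hs : 1 < (linePt u t).re := by simp [hu]
  have hpos : ∀ p : Nat.Primes, (0 : ℝ) < ((p : ℕ) : ℝ) := fun p => by exact_mod_cast p.2.pos
  have hnorm : ∀ p : Nat.Primes, ‖((p : ℕ) : ℂ) ^ (-linePt u t)‖ = ((p : ℕ) : ℝ) ^ (-(1 + u)) :=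
    fun p => by simpa using (cpow_neg_linePt (hpos p) u t).2
  have hre : ∀ p : Nat.Primes, (((p : ℕ) : ℂ) ^ (-linePt u t)).re =
      ((p : ℕ) : ℝ) ^ (-(1 + u)) * Real.cos (t * Real.log p) :=
    fun p => by simpa using (cpow_neg_linePt (hpos p) u t).1
  have hz : Summable fun p : Nat.Primes => ((p : ℕ) : ℂ) ^ (-linePt u t) := by
    refine Summable.of_norm ?_
    simp_rw [hnorm]
    exact Nat.Primes.summable_rpow.2 (by linarith)
  have hE : ∀ p : Nat.Primes, ‖-Complex.log (1 - ((p : ℕ) : ℂ) ^ (-linePt u t)) -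
      ((p : ℕ) : ℂ) ^ (-linePt u t)‖ ≤ ((p : ℕ) : ℝ) ^ (-2 : ℝ) := by
    intro p
    have hp2 : (2 : ℝ) ≤ ((p : ℕ) : ℝ) := by exact_mod_cast p.2.two_le
    set z := ((p : ℕ) : ℂ) ^ (-linePt u t)
    have hz1 : ‖z‖ ≤ ((p : ℕ) : ℝ) ^ (-1 : ℝ) := by
      rw [hnorm]
      exact Real.rpow_le_rpow_of_exponent_le (by linarith) (by linarith)
    have hz2 : ((p : ℕ) : ℝ) ^ (-1 : ℝ) ≤ 1 / 2 := by
      rw [Real.rpow_neg_one, one_div]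
      exact inv_anti₀ (by norm_num) hp2
    have h := Complex.norm_log_one_add_sub_self_le (z := -z) (by rw [norm_neg]; linarith)
    rw [norm_neg] at h
    have e : -Complex.log (1 - z) - z = -(Complex.log (1 + -z) - -z) := by
      rw [← sub_eq_add_neg]; ring
    rw [e, norm_neg]
    refine h.trans ?_
    have h1 : (1 - ‖z‖)⁻¹ ≤ 2 := by
      rw [inv_le_comm₀ (by linarith) (by norm_num)]; linarith
    have h2 : ‖z‖ ^ 2 ≤ ((p : ℕ) : ℝ) ^ (-2 : ℝ) := by
      have : ((p : ℕ) : ℝ) ^ (-2 : ℝ) = (((p : ℕ) : ℝ) ^ (-1 : ℝ)) ^ 2 := by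
        rw [← Real.rpow_natCast, ← Real.rpow_mul (by positivity)]; norm_num
      rw [this]
      gcongr
    have h3 : 0 ≤ ‖z‖ ^ 2 := by positivity
    nlinarith
  have hEs : Summable fun p : Nat.Primes => -Complex.log (1 - ((p : ℕ) : ℂ) ^ (-linePt u t)) -
      ((p : ℕ) : ℂ) ^ (-linePt u t) := Summable.of_norm_bounded hS hE
  have hlog : Real.log ‖riemannZeta (linePt u t)‖ =
      (∑' p : Nat.Primes, -Complex.log (1 - ((p : ℕ) : ℂ) ^ (-linePt u t))).re := by
    rw [← riemannZeta_eulerProduct_exp_log hs, Complex.norm_exp, Real.log_exp]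
  have hsplit : ∑' p : Nat.Primes, -Complex.log (1 - ((p : ℕ) : ℂ) ^ (-linePt u t)) =
      ∑' p : Nat.Primes, ((p : ℕ) : ℂ) ^ (-linePt u t) +
      ∑' p : Nat.Primes, (-Complex.log (1 - ((p : ℕ) : ℂ) ^ (-linePt u t)) -
      ((p : ℕ) : ℂ) ^ (-linePt u t)) := by
    rw [← hz.tsum_add hEs]
    congr 1; ext p; ring
  have hmain : (∑' p : Nat.Primes, ((p : ℕ) : ℂ) ^ (-linePt u t)).re =
      ∑' p : Nat.Primes, ((p : ℕ) : ℝ) ^ (-(1 + u)) * Real.cos (t * Real.log p) := by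
    rw [Complex.re_tsum hz]
    simp_rw [hre]
  rw [hlog, hsplit, Complex.add_re, hmain, add_sub_cancel_left]
  refine (Complex.abs_re_le_norm _).trans ?_
  have := tsum_of_norm_bounded hS.hasSum hE
  linarith

/-! ### The zeros near the line `Re s = 1` -/

/-- By the Euler product `|ζ(5/4 + it)|` is bounded below uniformly in `t`. -/
lemma zeta1_center_lower : ∃ c : ℝ, 0 < c ∧ ∀ t : ℝ, c ≤ ‖riemannZeta₁ (linePt (1 / 4) t)‖ := by
  obtain ⟨C, hC, h⟩ := log_zeta_primes
  have hS : Summable fun p : Nat.Primes => ((p : ℕ) : ℝ) ^ (-(1 + 1 / 4) : ℝ) :=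
    Nat.Primes.summable_rpow.2 (by norm_num)
  set S := ∑' p : Nat.Primes, ((p : ℕ) : ℝ) ^ (-(1 + 1 / 4) : ℝ)
  refine ⟨1 / 4 * Real.exp (-(C + S)), by positivity, fun t => ?_⟩
  have h1 := (abs_le.1 (h (1 / 4) t (by norm_num))).1
  have h2 : |∑' p : Nat.Primes, ((p : ℕ) : ℝ) ^ (-(1 + 1 / 4) : ℝ) * Real.cos (t * Real.log p)| ≤ S := by
    rw [← Real.norm_eq_abs]
    refine tsum_of_norm_bounded hS.hasSum fun p => ?_
    rw [Real.norm_eq_abs, abs_mul, abs_of_nonneg (by positivity)]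
    exact mul_le_of_le_one_right (by positivity) (Real.abs_cos_le_one _)
  have h3 := (abs_le.1 h2).1
  have hz := zeta_ne_zero (u := 1 / 4) (by norm_num) t
  have h4 : Real.exp (-(C + S)) ≤ ‖riemannZeta (linePt (1 / 4) t)‖ := by
    rw [← Real.le_log_iff_exp_le (norm_pos_iff.2 hz)]
    linarith
  have hne := linePt_ne_one (u := 1 / 4) (t := t) (Or.inl (by norm_num))
  have h5 : riemannZeta₁ (linePt (1 / 4) t) = (linePt (1 / 4) t - 1) * riemannZeta (linePt (1 / 4) t) := by
    rw [riemannZeta_eq_inv_sub_mul hne, mul_inv_cancel_left₀ (sub_ne_zero.2 hne)]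
  rw [h5, norm_mul]
  have h6 : 1 / 4 ≤ ‖linePt (1 / 4) t - 1‖ := by
    have := (le_abs_self _).trans (Complex.abs_re_le_norm (linePt (1 / 4) t - 1))
    simpa using this
  gcongr

lemma one_le_log_add_four (t : ℝ) : 1 ≤ Real.log (|t| + 4) := by
  rw [Real.le_log_iff_exp_le (by positivity)]
  have := Real.exp_one_lt_d9
  have := abs_nonneg t
  linarith

/-- Near height `t` the real part of the logarithmic derivative of `(s - 1) ζ(s)` is a sum over
zeros to the left of the line `Re s = 1`, up to an error `O(log (|t| + 4))`. -/
lemma zeta1_local : ∃ K : ℝ, 0 < K ∧ ∀ t : ℝ, ∃ (Z : Finset ℂ) (m : ℂ → ℕ), (∀ ρ ∈ Z, ρ.re < 1) ∧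
    ∀ u : ℝ, 0 ≤ u → u ≤ 1 / 2 →
      |(deriv riemannZeta₁ (linePt u t) / riemannZeta₁ (linePt u t)).re -
        ∑ ρ ∈ Z, (m ρ : ℝ) * ((linePt u t - ρ)⁻¹).re| ≤ K * Real.log (|t| + 4) := by
  obtain ⟨A, hA, hgrow⟩ := zeta1_growth
  obtain ⟨c, hc, hlow⟩ := zeta1_center_lower
  set K := 2 + |Real.log ((1 + A) / c)| with hK
  have hKpos : 0 < K := by positivity
  refine ⟨880 * K, by positivity, fun t => ?_⟩
  set L := Real.log (|t| + 4) with hL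
  have hL1 : 1 ≤ L := one_le_log_add_four t
  have hexpL : Real.exp L = |t| + 4 := Real.exp_log (by positivity)
  have hbound : ∀ z ∈ Metric.closedBall (linePt (1 / 4) t) (3 / 5),
      ‖riemannZeta₁ z‖ ≤ Real.exp (K * L) * ‖riemannZeta₁ (linePt (1 / 4) t)‖ := by
    intro z hz
    rw [mem_closedBall_iff_norm] at hz
    have hre := (abs_le.1 ((Complex.abs_re_le_norm _).trans hz)).1
    simp at hre
    have hn0 : ‖linePt (1 / 4) t - 1‖ ≤ 1 / 4 + |t| := by
      refine (Complex.norm_le_abs_re_add_abs_im _).trans ?_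
      simp
    have hn1 : ‖z - 1‖ ≤ |t| + 1 := by
      have : z - 1 = (z - linePt (1 / 4) t) + (linePt (1 / 4) t - 1) := by ring
      rw [this]
      refine (norm_add_le _ _).trans ?_
      linarith
    have hn2 : ‖z‖ ≤ |t| + 2 := by
      have : z = (z - 1) + 1 := by ring
      rw [this]
      refine (norm_add_le _ _).trans ?_
      rw [norm_one]; linarith
    have h1 : ‖riemannZeta₁ z‖ ≤ (1 + A) * (|t| + 4) ^ 2 := by
      refine (hgrow z (by linarith)).trans ?_
      have ht := abs_nonneg t
      have h2 : ‖z‖ * ‖z - 1‖ ≤ (|t| + 4) * (|t| + 4) := by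
        gcongr <;> linarith
      nlinarith
    have h2 : (1 + A) * (|t| + 4) ^ 2 ≤ Real.exp (K * L) * c := by
      have e1 : (1 + A) / c ≤ Real.exp (|Real.log ((1 + A) / c)| * L) := by
        rw [← Real.log_le_iff_le_exp (by positivity)]
        have := le_abs_self (Real.log ((1 + A) / c))
        have := abs_nonneg (Real.log ((1 + A) / c))
        nlinarith
      have e2 : Real.exp (K * L) = (|t| + 4) ^ 2 * Real.exp (|Real.log ((1 + A) / c)| * L) := by
        rw [hK, add_mul, Real.exp_add, two_mul, Real.exp_add, hexpL, sq]
      rw [e2]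
      rw [div_le_iff₀ hc] at e1
      have := mul_le_mul_of_nonneg_left e1 (sq_nonneg (|t| + 4))
      linarith
    refine h1.trans (h2.trans ?_)
    gcongr
    exact hlow t
  obtain ⟨Z, m, hZ, hmain⟩ := landau differentiable_riemannZeta₁
    (zeta1_ne_zero (s := linePt (1 / 4) t) (by simp)) (B := K * L) (by positivity) hbound
  refine ⟨Z, m, fun ρ hρ => ?_, fun u hu0 hu => ?_⟩
  · by_contra! hcon
    exact zeta1_ne_zero hcon (hZ ρ hρ)
  · have hmem : linePt u t ∈ Metric.closedBall (linePt (1 / 4) t) (1 / 4) := by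
      rw [mem_closedBall_iff_norm]
      refine (Complex.norm_le_abs_re_add_abs_im _).trans ?_
      simp
      rw [abs_le]
      constructor <;> linarith
    have h := hmain _ hmem (zeta1_ne_zero (by simp [hu0]))
    have h2 := (Complex.abs_re_le_norm _).trans h
    rw [Complex.sub_re, Complex.re_sum] at h2
    rw [mul_assoc]
    have e : ∀ ρ : ℂ, ((m ρ : ℂ) / (linePt u t - ρ)).re = (m ρ : ℝ) * ((linePt u t - ρ)⁻¹).re := by
      intro ρ
      rw [div_eq_mul_inv, ← Complex.ofReal_natCast, Complex.re_ofReal_mul]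
    simpa only [e] using h2

lemma inv_re_nonneg {u t : ℝ} (hu : 0 ≤ u) {ρ : ℂ} (hρ : ρ.re < 1) :
    0 ≤ ((linePt u t - ρ)⁻¹).re := by
  rw [Complex.inv_re]
  refine div_nonneg ?_ (Complex.normSq_nonneg _)
  simp; linarith

/-- If the sum over zeros is at most `0.8 / u₀` at `u₀`, no zero is within `u₀ / 10` of `1 + it`
(such a zero alone would contribute more), so each term can grow at most by a factor `121` when
`u` decreases to `0`. -/
lemma zero_sum_bound {Z : Finset ℂ} {m : ℂ → ℕ} (hZ : ∀ ρ ∈ Z, ρ.re < 1) {t u u₀ : ℝ}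
    (hu : 0 < u) (huu : u ≤ u₀)
    (h : ∑ ρ ∈ Z, (m ρ : ℝ) * ((linePt u₀ t - ρ)⁻¹).re ≤ 4 / 5 / u₀) :
    ∑ ρ ∈ Z, (m ρ : ℝ) * ((linePt u t - ρ)⁻¹).re ≤ 97 / u₀ := by
  have hu0 : 0 < u₀ := hu.trans_le huu
  have hterm : ∀ ρ ∈ Z, (m ρ : ℝ) * ((linePt u t - ρ)⁻¹).re ≤
      121 * ((m ρ : ℝ) * ((linePt u₀ t - ρ)⁻¹).re) := by
    intro ρ hρ
    rcases Nat.eq_zero_or_pos (m ρ) with h0 | h0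
    · simp [h0]
    have hm1 : (1 : ℝ) ≤ m ρ := by exact_mod_cast h0
    set a := 1 - ρ.re with ha
    set b := t - ρ.im with hb
    have ha0 : 0 < a := by have := hZ ρ hρ; linarith
    have e : ∀ v : ℝ, ((linePt v t - ρ)⁻¹).re = (v + a) / ((v + a) ^ 2 + b ^ 2) := by
      intro v
      rw [Complex.inv_re, Complex.normSq_apply]
      simp only [Complex.sub_re, Complex.sub_im, linePt_re, linePt_im]
      rw [ha, hb]
      congr 1 <;> ring
    have hle : (m ρ : ℝ) * ((linePt u₀ t - ρ)⁻¹).re ≤ 4 / 5 / u₀ :=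
      (Finset.single_le_sum (f := fun ρ => (m ρ : ℝ) * ((linePt u₀ t - ρ)⁻¹).re)
        (fun ρ hρ => mul_nonneg (by positivity) (inv_re_nonneg hu0.le (hZ ρ hρ))) hρ).trans h
    have hle2 : ((linePt u₀ t - ρ)⁻¹).re ≤ 4 / 5 / u₀ :=
      (le_mul_of_one_le_left (inv_re_nonneg hu0.le (hZ ρ hρ)) hm1).trans hle
    have hfar : (u₀ / 10) ^ 2 ≤ a ^ 2 + b ^ 2 := by
      by_contra! hcon
      rw [e, div_le_div_iff₀ (by positivity) hu0] at hle2
      nlinarith [sq_nonneg b, mul_pos ha0 hu0]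
    have hcmp : ((linePt u t - ρ)⁻¹).re ≤ 121 * ((linePt u₀ t - ρ)⁻¹).re := by
      rw [e, e, ← mul_div_assoc, div_le_div_iff₀ (by positivity) (by positivity)]
      have hq : (u₀ + a) ^ 2 + b ^ 2 ≤ 121 * ((u + a) ^ 2 + b ^ 2) := by
        nlinarith [sq_nonneg (10 * a - u₀), mul_pos hu ha0, sq_nonneg b, mul_pos ha0 hu0, sq_nonneg u, sq_nonneg a]
      have h1 : 0 ≤ (u + a) ^ 2 + b ^ 2 := by positivity
      calc (u + a) * ((u₀ + a) ^ 2 + b ^ 2) ≤ (u₀ + a) * (121 * ((u + a) ^ 2 + b ^ 2)) := by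
            gcongr
        _ = _ := by ring
    calc _ ≤ (m ρ : ℝ) * (121 * ((linePt u₀ t - ρ)⁻¹).re) := by gcongr
      _ = _ := by ring
  refine (Finset.sum_le_sum hterm).trans ?_
  rw [← Finset.mul_sum]
  have : 121 * (4 / 5 / u₀) ≤ 97 / u₀ := by
    rw [← mul_div_assoc]; gcongr; norm_num
  linarith

lemma abs_re_inv_sub_one_le {u t : ℝ} (ht : 1 / 2 ≤ |t|) : |((linePt u t - 1)⁻¹).re| ≤ 2 := by
  refine (Complex.abs_re_le_norm _).trans ?_
  rw [norm_inv, inv_le_comm₀ _ (by norm_num)]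
  · have := Complex.abs_im_le_norm (linePt u t - 1)
    simp at this
    norm_num at ht ⊢
    linarith
  · rw [norm_pos_iff, sub_ne_zero]
    refine linePt_ne_one (Or.inr ?_)
    rintro rfl
    norm_num at ht

/-- The classical consequence of the absence of zeros near `Re s = 1`: the real part of `ζ'/ζ` is
bounded above by a multiple of `log (|t| + 4)` all the way to the line. -/
lemma re_logDeriv_le : ∃ C : ℝ, 0 < C ∧ ∀ t : ℝ, 1 / 2 ≤ |t| → ∀ u : ℝ, 0 < u → u ≤ 3 →
    (deriv riemannZeta (linePt u t) / riemannZeta (linePt u t)).re ≤ C * Real.log (|t| + 4) := by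
  obtain ⟨K, hK, hloc⟩ := zeta1_local
  obtain ⟨C₀, hC₀, hreal⟩ := neg_logDeriv_real_le
  set K₂ := 3 * C₀ + 10 + 6 * K with hK₂
  refine ⟨1940 * K₂ + K + C₀, by positivity, fun t ht u hu hu3 => ?_⟩
  set L := Real.log (|t| + 4) with hL
  have hL1 : 1 ≤ L := one_le_log_add_four t
  have hL2 : Real.log (|2 * t| + 4) ≤ 2 * L := by
    have h1 : 2 * L = Real.log ((|t| + 4) ^ 2) := by rw [Real.log_pow]; norm_num [hL]
    rw [h1, abs_mul, abs_two]
    refine Real.log_le_log (by positivity) ?_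
    nlinarith [abs_nonneg t]
  have ht2 : 1 / 2 ≤ |2 * t| := by
    rw [abs_mul, abs_two]; linarith
  have ht0 : t ≠ 0 := by
    rintro rfl
    norm_num at ht
  have hsplit : ∀ v τ : ℝ, 0 < v →
      (deriv riemannZeta (linePt v τ) / riemannZeta (linePt v τ)).re =
        -((linePt v τ - 1)⁻¹).re +
        (deriv riemannZeta₁ (linePt v τ) / riemannZeta₁ (linePt v τ)).re := by
    intro v τ hv
    rw [logDeriv_zeta_eq (by simp [hv.le]) (linePt_ne_one (Or.inl hv)), Complex.add_re,
      Complex.neg_re]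
  obtain ⟨Z, m, hZ, hm⟩ := hloc t
  obtain ⟨Z', m', hZ', hm'⟩ := hloc (2 * t)
  -- The `3-4-1` inequality, in which the zeros near height `2t` contribute with a favourable sign.
  have hsum : ∀ v : ℝ, 0 < v → v ≤ 1 / 2 →
      ∑ ρ ∈ Z, (m ρ : ℝ) * ((linePt v t - ρ)⁻¹).re ≤ 3 / 4 / v + K₂ * L := by
    intro v hv hv2
    have h341 := three_four_one hv t
    have h0 := hreal v hv (by linarith)
    have ht1 := hsplit v t hv
    have ht2' := hsplit v (2 * t) hv
    have h1 := (abs_le.1 (hm v hv.le hv2)).1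
    have h2 := (abs_le.1 (hm' v hv.le hv2)).1
    have h3 := (abs_le.1 (abs_re_inv_sub_one_le (u := v) ht)).2
    have h4 := (abs_le.1 (abs_re_inv_sub_one_le (u := v) ht2)).2
    have h5 : 0 ≤ ∑ ρ ∈ Z', (m' ρ : ℝ) * ((linePt v (2 * t) - ρ)⁻¹).re :=
      Finset.sum_nonneg fun ρ hρ => mul_nonneg (by positivity) (inv_re_nonneg hv.le (hZ' ρ hρ))
    rw [← hL] at h1
    rw [Complex.neg_re, Complex.neg_re] at h341
    rw [Complex.neg_re] at h0 h341
    have h6 : K * Real.log (|2 * t| + 4) ≤ K * (2 * L) := by gcongr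
    have e : 3 / 4 / v = 3 / 4 * (1 / v) := by ring
    rw [e, hK₂]
    nlinarith
  have hK₂1 : 1 ≤ K₂ := by rw [hK₂]; linarith
  have hKL : 1 ≤ K₂ * L := by nlinarith
  -- With this `u₀` the bound `hsum` becomes exactly `(3/4 + 1/20) / u₀ = (4/5) / u₀`.
  set u₀ := 1 / (20 * (K₂ * L)) with hu₀
  have hu₀pos : 0 < u₀ := by positivity
  have hinv : 1 / u₀ = 20 * (K₂ * L) := by rw [hu₀, one_div_one_div]
  have hu₀2 : u₀ ≤ 1 / 2 := by
    rw [hu₀]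
    apply one_div_le_one_div_of_le <;> linarith
  have hKLnn : 0 ≤ K₂ * L := by linarith
  have hCL : C₀ ≤ C₀ * L := le_mul_of_one_le_right hC₀.le hL1
  have hKLk : 0 ≤ K * L := by positivity
  rcases le_total u u₀ with h | h
  · have h1 := hsum u₀ hu₀pos hu₀2
    have h2 := zero_sum_bound hZ hu h (t := t) (m := m) (by
      refine h1.trans ?_
      have e1 : 4 / 5 / u₀ = 4 / 5 * (1 / u₀) := by ring
      have e2 : 3 / 4 / u₀ = 3 / 4 * (1 / u₀) := by ring
      rw [e1, e2, hinv]
      linarith)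
    have h3 := (abs_le.1 (hm u hu.le (by linarith))).2
    have h4 : 0 ≤ ((linePt u t - 1)⁻¹).re := by
      rw [Complex.inv_re]
      refine div_nonneg ?_ (Complex.normSq_nonneg _)
      simp [hu.le]
    have e1 : 97 / u₀ = 97 * (1 / u₀) := by ring
    rw [e1, hinv] at h2
    rw [hsplit u t hu]
    nlinarith
  · have h1 := re_logDeriv_le_real hu t
    have h2 := hreal u hu hu3
    have h3 : 1 / u ≤ 1 / u₀ := one_div_le_one_div_of_le hu₀pos h
    rw [hinv] at h3
    nlinarith

/-! ### Truncated prime sums -/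

lemma mem_primesUpTo {x : ℝ} (hx : 0 ≤ x) {n : ℕ} :
    n ∈ primesUpTo x ↔ (n : ℝ) ≤ x ∧ n.Prime := by
  simp [primesUpTo, Nat.le_floor_iff hx]

/-- With `u = 1 / log x`, replacing the cut-off `p ≤ x` by the smooth weight `p ^ (-u)` costs at
most `e u log p / p ^ (1 + u)` at each prime `p`, and the sum of these costs is bounded because
`-ζ'/ζ(1 + u) = 1 / u + O(1)`. -/
lemma prime_sum_eq : ∃ C : ℝ, 0 < C ∧ ∀ x t : ℝ, 0 < x → 1 / 3 ≤ Real.log x →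
    |∑ p ∈ primesUpTo x, Real.cos (t * Real.log p) / p -
      Real.log ‖riemannZeta (linePt (1 / Real.log x) t)‖| ≤ C := by
  obtain ⟨C₁, hC₁, h1⟩ := log_zeta_primes
  obtain ⟨C₀, hC₀, h0⟩ := neg_logDeriv_real_le
  refine ⟨C₁ + Real.exp 1 * (1 + 3 * C₀), by positivity, fun x t hx hlx => ?_⟩
  have hlpos : 0 < Real.log x := by linarith
  set u := 1 / Real.log x with hu
  have hupos : 0 < u := by positivity
  have hu3 : u ≤ 3 := by rw [hu, div_le_iff₀ hlpos]; linarith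
  have hA : HasSum (fun n : ℕ => if n ∈ primesUpTo x then Real.cos (t * Real.log n) / n else 0)
      (∑ p ∈ primesUpTo x, Real.cos (t * Real.log p) / p) := by
    rw [← Finset.sum_congr rfl fun n (hn : n ∈ primesUpTo x) =>
      if_pos (c := n ∈ primesUpTo x) (t := Real.cos (t * Real.log n) / n) (e := 0) hn]
    exact hasSum_sum_of_ne_finset_zero fun n hn => if_neg hn
  have hB : HasSum (fun n : ℕ => if n.Prime then (n : ℝ) ^ (-(1 + u)) * Real.cos (t * Real.log n)
      else 0) (∑' p : Nat.Primes, (p : ℝ) ^ (-(1 + u)) * Real.cos (t * Real.log p)) := by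
    have hs : Summable fun p : Nat.Primes => (p : ℝ) ^ (-(1 + u)) * Real.cos (t * Real.log p) := by
      refine Summable.of_norm_bounded (g := fun p : Nat.Primes => ((p : ℕ) : ℝ) ^ (-(1 + u)))
        (Nat.Primes.summable_rpow.2 (by linarith)) fun p => ?_
      rw [norm_mul, Real.norm_of_nonneg (by positivity)]
      exact mul_le_of_le_one_right (by positivity) (Real.abs_cos_le_one _)
    have := (hasSum_subtype_iff_indicator (s := {p : ℕ | p.Prime})
      (f := fun n : ℕ => (n : ℝ) ^ (-(1 + u)) * Real.cos (t * Real.log n))).1 hs.hasSum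
    convert this using 1
    ext n
    simp [Set.indicator_apply]
  have hV := (vonMangoldt_hasSum hupos 0).mul_left (Real.exp 1 * u)
  have hbound : |∑ p ∈ primesUpTo x, Real.cos (t * Real.log p) / p -
      ∑' p : Nat.Primes, (p : ℝ) ^ (-(1 + u)) * Real.cos (t * Real.log p)| ≤
      Real.exp 1 * u * (-(deriv riemannZeta (linePt u 0) / riemannZeta (linePt u 0))).re := by
    rw [← (hA.sub hB).tsum_eq, ← Real.norm_eq_abs]
    refine tsum_of_norm_bounded hV fun n => ?_
    rw [zero_mul, Real.cos_zero, mul_one]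
    by_cases hn : n.Prime
    · rw [if_pos hn, ArithmeticFunction.vonMangoldt_apply_prime hn]
      have hn0 : (0 : ℝ) < n := by exact_mod_cast hn.pos
      have hn1 : (1 : ℝ) ≤ n := by exact_mod_cast hn.one_lt.le
      set w := u * Real.log n with hw
      have hw0 : 0 ≤ w := mul_nonneg hupos.le (Real.log_nonneg hn1)
      have hpow : (n : ℝ) ^ (-(1 + u)) = (n : ℝ)⁻¹ * Real.exp (-w) := by
        rw [Real.rpow_def_of_pos hn0, ← Real.exp_log (inv_pos.2 hn0), ← Real.exp_add, Real.log_inv]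
        congr 1
        rw [hw]; ring
      have hcos := Real.abs_cos_le_one (t * Real.log n)
      have hrhs : Real.exp 1 * u * (Real.log n * (n : ℝ) ^ (-(1 + u))) =
          (n : ℝ)⁻¹ * (w * (Real.exp 1 * Real.exp (-w))) := by
        rw [hpow, hw]; ring
      rw [hrhs, hpow]
      have hinv : (0 : ℝ) ≤ (n : ℝ)⁻¹ := by positivity
      by_cases hnx : (n : ℝ) ≤ x
      · rw [if_pos ((mem_primesUpTo hx.le).2 ⟨hnx, hn⟩)]
        have hw1 : w ≤ 1 := by
          rw [hw, hu, one_div_mul_eq_div, div_le_one hlpos]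
          exact Real.log_le_log hn0 hnx
        have e : Real.cos (t * Real.log n) / n - (n : ℝ)⁻¹ * Real.exp (-w) *
            Real.cos (t * Real.log n) =
            (n : ℝ)⁻¹ * ((1 - Real.exp (-w)) * Real.cos (t * Real.log n)) := by ring
        rw [e, norm_mul, norm_mul, Real.norm_of_nonneg hinv, Real.norm_of_nonneg
          (sub_nonneg.2 (Real.exp_le_one_iff.2 (by linarith))), Real.norm_eq_abs]
        refine mul_le_mul_of_nonneg_left ?_ hinv
        have e1 : 1 - Real.exp (-w) ≤ w := by
          have := Real.add_one_le_exp (-w); linarith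
        have e2 : 1 ≤ Real.exp 1 * Real.exp (-w) := by
          rw [← Real.exp_add]; exact Real.one_le_exp (by linarith)
        have e3 : 0 ≤ 1 - Real.exp (-w) := sub_nonneg.2 (Real.exp_le_one_iff.2 (by linarith))
        calc _ ≤ (1 - Real.exp (-w)) * 1 := by gcongr
          _ ≤ w * 1 := by linarith
          _ ≤ _ := by gcongr
      · rw [if_neg (fun h => hnx ((mem_primesUpTo hx.le).1 h).1)]
        push Not at hnx
        have hw1 : 1 ≤ w := by
          rw [hw, hu, one_div_mul_eq_div, one_le_div hlpos]
          exact Real.log_le_log hx hnx.le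
        rw [zero_sub, norm_neg, norm_mul, norm_mul, Real.norm_of_nonneg hinv,
          Real.norm_of_nonneg (Real.exp_pos _).le, Real.norm_eq_abs, mul_assoc]
        refine mul_le_mul_of_nonneg_left ?_ hinv
        have e1 : 1 ≤ w * Real.exp 1 := by
          have := Real.one_le_exp (zero_le_one' ℝ)
          nlinarith
        calc _ ≤ Real.exp (-w) * 1 := by gcongr
          _ ≤ Real.exp (-w) * (w * Real.exp 1) := by gcongr
          _ = _ := by ring
    · have hn' : n ∉ primesUpTo x := fun h => hn ((mem_primesUpTo hx.le).1 h).2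
      rw [if_neg hn, if_neg hn', sub_zero, norm_zero]
      exact mul_nonneg (by positivity) (mul_nonneg ArithmeticFunction.vonMangoldt_nonneg
        (by positivity))
  have h3 : Real.exp 1 * u * (-(deriv riemannZeta (linePt u 0) / riemannZeta (linePt u 0))).re ≤
      Real.exp 1 * (1 + 3 * C₀) := by
    rw [mul_assoc]
    refine mul_le_mul_of_nonneg_left ?_ (Real.exp_pos 1).le
    calc _ ≤ u * (1 / u + C₀) := by gcongr; exact h0 u hupos hu3
      _ = 1 + u * C₀ := by field_simp
      _ ≤ _ := by gcongr
  have h4 := abs_le.1 (h1 u t hupos)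
  have h5 := abs_le.1 (hbound.trans h3)
  rw [abs_le]
  constructor <;> linarith

/-! ### Size and variation of `log |ζ|` -/

lemma log_norm_zeta_eq {u t : ℝ} (hu : 0 < u) :
    Real.log ‖riemannZeta (linePt u t)‖ =
      Real.log ‖riemannZeta₁ (linePt u t)‖ - Real.log ‖linePt u t - 1‖ := by
  have hne := linePt_ne_one (u := u) (t := t) (Or.inl hu)
  have h1 : 0 < ‖linePt u t - 1‖ := norm_pos_iff.2 (sub_ne_zero.2 hne)
  have h2 : 0 < ‖riemannZeta₁ (linePt u t)‖ := norm_pos_iff.2 (zeta1_ne_zero (by simp [hu.le]))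
  rw [riemannZeta_eq_inv_sub_mul hne, norm_mul, norm_inv, Real.log_mul (by positivity)
    (by positivity), Real.log_inv]
  ring

/-- The simple pole of `ζ` at `1`. -/
lemma log_norm_zeta_real : ∃ C : ℝ, 0 < C ∧ ∀ u : ℝ, 0 < u → u ≤ 3 →
    |Real.log ‖riemannZeta (linePt u 0)‖ - Real.log (1 / u)| ≤ C := by
  obtain ⟨C, hC, h⟩ := zeta1_box
  refine ⟨C, hC, fun u hu hu3 => ?_⟩
  have e : ‖linePt u 0 - 1‖ = u := by
    rw [linePt_sub_one]
    have : (⟨u, 0⟩ : ℂ) = (u : ℂ) := rfl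
    rw [this, Complex.norm_real, Real.norm_of_nonneg hu.le]
  rw [log_norm_zeta_eq hu, e, one_div, Real.log_inv, sub_neg_eq_add, sub_add_cancel]
  exact (h u 0 hu.le hu3 (by simp)).2

lemma log_norm_zeta_lower : ∃ C : ℝ, 0 < C ∧ ∀ u t : ℝ, 0 < u → u ≤ 3 → |t| ≤ 1 / 2 →
    -C ≤ Real.log ‖riemannZeta (linePt u t)‖ := by
  obtain ⟨C, hC, h⟩ := zeta1_box
  refine ⟨C + 3, by positivity, fun u t hu hu3 ht => ?_⟩
  have h1 := (abs_le.1 (h u t hu.le hu3 ht).2).1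
  have hne := linePt_ne_one (u := u) (t := t) (Or.inl hu)
  have h0 : 0 < ‖linePt u t - 1‖ := norm_pos_iff.2 (sub_ne_zero.2 hne)
  have h2 : ‖linePt u t - 1‖ ≤ 4 := by
    refine (Complex.norm_le_abs_re_add_abs_im _).trans ?_
    simp [abs_of_pos hu]
    linarith
  have h3 := Real.log_le_sub_one_of_pos h0
  rw [log_norm_zeta_eq hu]
  linarith

lemma hasDerivAt_log_norm_zeta {u : ℝ} (hu : 0 < u) (t : ℝ) :
    HasDerivAt (fun v : ℝ => Real.log ‖riemannZeta (linePt v t)‖)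
      (deriv riemannZeta (linePt u t) / riemannZeta (linePt u t)).re u := by
  have hl : HasDerivAt (fun v : ℝ => linePt v t) 1 u := by
    have h1 : HasDerivAt (fun v : ℝ => (v : ℂ) + linePt 0 t) 1 u :=
      Complex.ofRealCLM.hasDerivAt.add_const _
    convert h1 using 1
    ext v
    apply Complex.ext <;> simp [add_comm]
  have hz := (differentiableAt_riemannZeta (linePt_ne_one (t := t) (Or.inl hu))).hasDerivAt.comp u hl
  rw [mul_one] at hz
  have hne := zeta_ne_zero hu t
  have hns := hz.norm_sq
  have hlog := (hns.log (by simpa using hne)).div_const 2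
  have e : (fun v : ℝ => Real.log ‖riemannZeta (linePt v t)‖) =
      fun v : ℝ => Real.log (‖riemannZeta (linePt v t)‖ ^ 2) / 2 := by
    ext v
    rw [Real.log_pow]; push_cast; ring
  rw [e]
  refine hlog.congr_deriv ?_
  simp only [Function.comp]
  rw [Complex.inner, Complex.div_re, ← Complex.normSq_eq_norm_sq]
  simp
  ring

/-! ### The two estimates -/

lemma small_height : ∃ C : ℝ, 0 < C ∧ ∀ x t : ℝ, 2 ≤ x → |t| ≤ 1 / 2 →
    ∑ p ∈ primesUpTo x, (1 - Real.cos (t * Real.log p)) / p ≤ Real.log (Real.log x) + C := by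
  obtain ⟨C₁, hC₁, h1⟩ := prime_sum_eq
  obtain ⟨C₂, hC₂, h2⟩ := log_norm_zeta_real
  obtain ⟨C₃, hC₃, h3⟩ := log_norm_zeta_lower
  refine ⟨2 * C₁ + C₂ + C₃, by positivity, fun x t hx ht => ?_⟩
  have hlx : 1 / 3 ≤ Real.log x := by
    have := Real.log_two_gt_d9
    have := Real.log_le_log (by norm_num) hx
    linarith
  have hlpos : 0 < Real.log x := by linarith
  have hu3 : 1 / Real.log x ≤ 3 := by rw [div_le_iff₀ hlpos]; linarith
  have a1 := (abs_le.1 (h1 x t (by linarith) hlx)).1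
  have a2 := (abs_le.1 (h1 x 0 (by linarith) hlx)).2
  have a3 := (abs_le.1 (h2 _ (one_div_pos.2 hlpos) hu3)).2
  have a4 := h3 _ t (one_div_pos.2 hlpos) hu3 ht
  rw [one_div_one_div] at a3
  simp only [zero_mul, Real.cos_zero] at a2
  simp only [sub_div, Finset.sum_sub_distrib]
  linarith

/-- Writing `y = exp (log (2|k|) ^ 2)`, the sum over `y < p ≤ x` is
`log log x - log log y + log |ζ(1 + 1/log y + it)| - log |ζ(1 + 1/log x + it)| + O(1)`. The last
difference is bounded by the mean value theorem: the derivative is `O(log (|t| + 4))`, which is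
`O(log (2|k|))`, and the interval has length at most `1 / log (2|k|) ^ 2`. -/
lemma large_height : ∃ C : ℝ, 0 < C ∧ ∀ x t : ℝ, ∀ k : ℤ, 2 ≤ x → k ≠ 0 → |t - k| ≤ 1 / 2 →
    ∑ p ∈ primesIn (Real.exp ((Real.log (2 * |(k : ℝ)|)) ^ 2)) x,
      (1 - Real.cos (t * Real.log p)) / p ≤ Real.log (Real.log x) + C := by
  obtain ⟨C₁, hC₁, h1⟩ := prime_sum_eq
  obtain ⟨C₂, hC₂, h2⟩ := log_norm_zeta_real
  obtain ⟨C₃, hC₃, h3⟩ := re_logDeriv_le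
  refine ⟨4 * C₁ + 2 * C₂ + 9 * C₃ + 2, by positivity, fun x t k hx hk ht => ?_⟩
  have hl2 := Real.log_two_gt_d9
  have hlx2 : Real.log 2 ≤ Real.log x := Real.log_le_log (by norm_num) hx
  have hlx : 1 / 3 ≤ Real.log x := by linarith
  have hlpos : 0 < Real.log x := by linarith
  -- `log log y` may be slightly negative (for `k = ±1`), but it is bounded below.
  have hthird : ∀ y : ℝ, 1 / 3 ≤ y → -2 ≤ Real.log y := by
    intro y hy
    have := Real.one_sub_inv_le_log_of_pos (show 0 < y by linarith)
    have h : y⁻¹ ≤ 3 := by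
      rw [inv_le_comm₀ (by linarith) (by norm_num)]; linarith
    linarith
  have hk1 : (1 : ℝ) ≤ |(k : ℝ)| := by exact_mod_cast Int.one_le_abs hk
  set L := Real.log (2 * |(k : ℝ)|) with hL
  have hL2 : Real.log 2 ≤ L := Real.log_le_log (by norm_num) (by linarith)
  have hLsq : 1 / 3 ≤ L ^ 2 := by nlinarith
  have hLsqpos : 0 < L ^ 2 := by linarith
  set a := Real.exp (L ^ 2) with ha
  have hapos : 0 < a := Real.exp_pos _
  have hlog_a : Real.log a = L ^ 2 := Real.log_exp _
  rcases le_or_gt x a with hxa | hxa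
  · have hempty : primesIn a x = ∅ := by
      ext n
      simp only [primesIn, Finset.mem_filter, Finset.mem_Iic, Finset.notMem_empty, iff_false]
      rintro ⟨hn, -, hn2⟩
      have := (Nat.le_floor_iff (by linarith)).1 hn
      linarith
    rw [hempty, Finset.sum_empty]
    have := hthird _ hlx
    have : 0 < C₁ + C₂ + C₃ := by positivity
    linarith
  have hsplit : ∀ g : ℕ → ℝ, ∑ p ∈ primesIn a x, g p =
      ∑ p ∈ primesUpTo x, g p - ∑ p ∈ primesUpTo a, g p := by
    intro g
    rw [eq_sub_iff_add_eq, ← Finset.sum_union]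
    · refine Finset.sum_congr ?_ fun _ _ => rfl
      ext n
      rw [Finset.mem_union, mem_primesUpTo hapos.le, mem_primesUpTo (by linarith)]
      simp only [primesIn, Finset.mem_filter, Finset.mem_Iic,
        Nat.le_floor_iff (show 0 ≤ x by linarith)]
      constructor
      · rintro (⟨h, hp, -⟩ | ⟨h, hp⟩)
        · exact ⟨h, hp⟩
        · exact ⟨by linarith, hp⟩
      · rintro ⟨h, hp⟩
        rcases lt_or_ge a (n : ℝ) with h' | h'
        · exact Or.inl ⟨h, hp, h'⟩
        · exact Or.inr ⟨h', hp⟩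
    · rw [Finset.disjoint_left]
      intro n hn hn'
      have h5 := ((mem_primesUpTo hapos.le).1 hn').1
      simp only [primesIn, Finset.mem_filter] at hn
      linarith [hn.2.2]
  have hu3 : 1 / Real.log x ≤ 3 := by rw [div_le_iff₀ hlpos]; linarith
  have hu3' : 1 / L ^ 2 ≤ 3 := by rw [div_le_iff₀ hLsqpos]; linarith
  have a1 := (abs_le.1 (h1 x t (by linarith) hlx)).1
  have a2 := (abs_le.1 (h1 x 0 (by linarith) hlx)).2
  have a3 := (abs_le.1 (h2 _ (one_div_pos.2 hlpos) hu3)).2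
  have b1 := (abs_le.1 (h1 a t hapos (by rw [hlog_a]; exact hLsq))).2
  have b2 := (abs_le.1 (h1 a 0 hapos (by rw [hlog_a]; exact hLsq))).1
  have b3 := (abs_le.1 (h2 _ (one_div_pos.2 hLsqpos) hu3')).1
  have b4 := hthird _ hLsq
  rw [one_div_one_div] at a3 b3
  rw [hlog_a] at b1 b2
  simp only [zero_mul, Real.cos_zero] at a2 b2
  have hk_le : |(k : ℝ)| ≤ |t| + 1 / 2 := by
    have := abs_sub_abs_le_abs_sub (k : ℝ) t
    rw [abs_sub_comm] at this
    linarith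
  have ht_le : |t| ≤ |(k : ℝ)| + 1 / 2 := by
    have := abs_sub_abs_le_abs_sub t (k : ℝ)
    linarith
  have hlogt : Real.log (|t| + 4) ≤ 3 * L := by
    have e : 3 * L = Real.log ((2 * |(k : ℝ)|) ^ 3) := by rw [Real.log_pow]; norm_num [hL]
    rw [e]
    refine Real.log_le_log (by positivity) ?_
    nlinarith [mul_nonneg (sub_nonneg.2 hk1) (sub_nonneg.2 hk1), pow_pos (lt_of_lt_of_le one_pos hk1) 2]
  have huu : 1 / Real.log x ≤ 1 / L ^ 2 := by
    apply one_div_le_one_div_of_le hLsqpos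
    rw [← hlog_a]
    exact Real.log_le_log hapos hxa.le
  have hmvt : Real.log ‖riemannZeta (linePt (1 / L ^ 2) t)‖ -
      Real.log ‖riemannZeta (linePt (1 / Real.log x) t)‖ ≤
      C₃ * Real.log (|t| + 4) * (1 / L ^ 2 - 1 / Real.log x) := by
    have hpos : ∀ v ∈ Set.Icc (1 / Real.log x) (1 / L ^ 2), 0 < v :=
      fun v hv => (one_div_pos.2 hlpos).trans_le hv.1
    refine (convex_Icc (1 / Real.log x) (1 / L ^ 2)).image_sub_le_mul_sub_of_deriv_le
      (f := fun v : ℝ => Real.log ‖riemannZeta (linePt v t)‖)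
      (fun v hv => (hasDerivAt_log_norm_zeta (hpos v hv) t).continuousAt.continuousWithinAt)
      (fun v hv => ((hasDerivAt_log_norm_zeta (hpos v (interior_subset hv))
        t).differentiableAt.differentiableWithinAt)) (fun v hv => ?_) _
      (Set.left_mem_Icc.2 huu) _ (Set.right_mem_Icc.2 huu) huu
    have hv' := interior_subset hv
    rw [(hasDerivAt_log_norm_zeta (hpos v hv') t).deriv]
    exact h3 t (by linarith) v (hpos v hv') (hv'.2.trans hu3')
  have hfin : C₃ * Real.log (|t| + 4) * (1 / L ^ 2 - 1 / Real.log x) ≤ 9 * C₃ := by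
    have e1 : C₃ * Real.log (|t| + 4) * (1 / L ^ 2 - 1 / Real.log x) ≤
        C₃ * (3 * L) * (1 / L ^ 2) := by
      have := one_div_pos.2 hlpos
      have hLnn : 0 ≤ C₃ * (3 * L) := mul_nonneg hC₃.le (by linarith)
      exact mul_le_mul (by gcongr) (by linarith) (sub_nonneg.2 huu) hLnn
    have hLpos : 0 < L := by linarith
    have e2 : C₃ * (3 * L) * (1 / L ^ 2) = 3 * C₃ * (1 / L) := by field_simp
    have e3 : 1 / L ≤ 3 := by rw [div_le_iff₀ hLpos]; linarith
    rw [e2] at e1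
    nlinarith
  rw [hsplit]
  simp only [sub_div, Finset.sum_sub_distrib]
  linarith

theorem stmt17 :
    ∃ C : ℝ, 0 < C ∧
      ∀ x : ℝ, 2 ≤ x →
        (sSup ((fun t : ℝ => ∑ p ∈ primesUpTo x, (1 - Real.cos (t * Real.log p)) / p) ''
              Set.Icc (-(1/2)) (1/2)) ≤
            Real.log (Real.log x) + C) ∧
        ∀ k : ℤ, k ≠ 0 →
          sSup ((fun t : ℝ =>
              ∑ p ∈ primesIn (Real.exp ((Real.log (2 * |(k : ℝ)|)) ^ 2)) x,
                (1 - Real.cos (t * Real.log p)) / p) ''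
            Set.Icc ((k : ℝ) - 1/2) ((k : ℝ) + 1/2)) ≤
          Real.log (Real.log x) + C := by
  obtain ⟨C₁, hC₁, h1⟩ := small_height
  obtain ⟨C₂, hC₂, h2⟩ := large_height
  refine ⟨C₁ + C₂, by positivity, fun x hx => ⟨?_, fun k hk => ?_⟩⟩
  · refine csSup_le ((Set.nonempty_Icc.2 (by norm_num)).image _) ?_
    rintro _ ⟨t, ht, rfl⟩
    have := h1 x t hx (abs_le.2 ht)
    linarith
  · refine csSup_le ((Set.nonempty_Icc.2 (by linarith)).image _) ?_
    rintro _ ⟨t, ht, rfl⟩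
    have := h2 x t k hx hk (abs_le.2 ⟨by linarith [ht.1], by linarith [ht.2]⟩)
    linarith
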